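/- If α ∈ Λ has E-degree n (i.e. α is a top form) and β ∈ Λ has E-degree 2, then ι_ξ²(α) * β = α * ι_ξ²(β). (This is the paper's identity ι_ξ²α∧β = α∧ι_ξ²β for a top-degree form α and a 2-form β, contracted twice with the odd vector field ξ.) -/

import Mathlib

/-!
The operator `ι_ξ` is an even derivation `D` of `Λ(E × G)`: moving `∂_i` past a vector costs a
sign, and moving `θ_i` past it costs a second one. A top form `α` is killed by right
multiplication by vectors of `E`, hence by the right ideal `E · Λ`. Now `β` lies in `E · E · Λ`, and
`D` preserves degree-one elements, which anticommute, so `D β` still lies in `E · Λ`. Thus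
`α * β = 0` and `α * D β = 0`, and differentiating these relations gives
`D² α * β = -(D α * D β) = α * D² β`.
-/

noncomputable section

open ExteriorAlgebra

variable (E G : Type) [AddCommGroup E] [Module ℝ E] [AddCommGroup G] [Module ℝ G]

/-- The ghost generator `θ = ι(0, g)`. -/
def ghost (g : G) : ExteriorAlgebra ℝ (E × G) := ExteriorAlgebra.ι ℝ ((0 : E), g)

/-- The extension `f̃(e, g) = f(e)` of a covector on `E` to `E × G`. -/
def fTilde (f : Module.Dual ℝ E) : Module.Dual ℝ (E × G) := f.comp (LinearMap.fst ℝ E G)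

/-- The odd contraction `ι_ξ x = Σ_i θ_i * ∂_i x`. -/
def iotaXi {k : ℕ} (g : Fin k → G) (f : Fin k → Module.Dual ℝ E) :
    ExteriorAlgebra ℝ (E × G) →ₗ[ℝ] ExteriorAlgebra ℝ (E × G) :=
  ∑ i, (LinearMap.mulLeft ℝ (ghost E G (g i))).comp
    (CliffordAlgebra.contractLeft (fTilde E G (f i)))

/-- The algebra map `Λ(E) → Λ(E × G)` induced by `e ↦ (e, 0)`. -/
def inclE : ExteriorAlgebra ℝ E →ₐ[ℝ] ExteriorAlgebra ℝ (E × G) :=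
  ExteriorAlgebra.lift ℝ ⟨(ExteriorAlgebra.ι ℝ).comp (LinearMap.inl ℝ E G),
    fun _ => ExteriorAlgebra.ι_sq_zero _⟩

/-- `x ∈ Λ(E × G)` has `E`-degree `p` if it is the image of an element of the `p`-th
exterior power of `E` under the algebra map induced by `e ↦ (e, 0)`. -/
def HasEDegree (p : ℕ) (x : ExteriorAlgebra ℝ (E × G)) : Prop :=
  x ∈ Submodule.map (inclE E G).toLinearMap (⋀[ℝ]^p E)

section Leibniz

variable {A : Type*} [NonUnitalNonAssocRing A]

theorem sq_mul_eq_mul_sq_of_leibniz {D : A →+ A} (hD : ∀ a b, D (a * b) = D a * b + a * D b)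
    {a b : A} (hab : a * b = 0) (haDb : a * D b = 0) : D (D a) * b = a * D (D b) := by
  have hDab : D a * b = 0 := by simpa only [hab, haDb, map_zero, add_zero] using (hD a b).symm
  calc
    D (D a) * b = -(D a * D b) := eq_neg_of_add_eq_zero_left (by rw [← hD, hDab, map_zero])
    _ = a * D (D b) := neg_eq_of_add_eq_zero_right (by rw [← hD, haDb, map_zero])

end Leibniz

section RightIdeal

variable {R A : Type*} [CommSemiring R] [Semiring A] [Algebra R A]

theorem mul_eq_zero_of_mem_mul_top {W : Submodule R A} {a b : A} (ha : ∀ w ∈ W, a * w = 0)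
    (hb : b ∈ W * ⊤) : a * b = 0 := by
  induction hb using Submodule.mul_induction_on' with
  | mem_mul_mem w hw y _ => rw [← mul_assoc, ha w hw, zero_mul]
  | add x _ y _ hx hy => rw [mul_add, hx, hy, add_zero]

theorem sq_mul_top_le_mul_top (W : Submodule R A) : W ^ 2 * ⊤ ≤ W * ⊤ := by
  rw [pow_two, mul_assoc]
  exact mul_le_mul_right le_top _

end RightIdeal

section DegreeOne

variable {R M : Type*} [CommRing R] [AddCommGroup M] [Module R M]

theorem ι_mul_ι_eq_neg (m n : M) : ι R m * ι R n = -(ι R n * ι R m) :=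
  eq_neg_of_add_eq_zero_left (ι_add_mul_swap m n)

theorem ι_mul_contractLeft_mul (v : M) (f : Module.Dual R M) (a b : ExteriorAlgebra R M) :
    ι R v * CliffordAlgebra.contractLeft f (a * b) =
      ι R v * CliffordAlgebra.contractLeft f a * b +
        a * (ι R v * CliffordAlgebra.contractLeft f b) := by
  induction a using ExteriorAlgebra.induction generalizing b with
  | algebraMap r =>
    rw [CliffordAlgebra.contractLeft_algebraMap_mul, CliffordAlgebra.contractLeft_algebraMap,
      mul_zero, zero_mul, zero_add, Algebra.left_comm]
  | ι m =>
    rw [CliffordAlgebra.contractLeft_ι_mul, CliffordAlgebra.contractLeft_ι, mul_sub, ← mul_assoc,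
      ι_mul_ι_eq_neg v m, neg_mul, sub_neg_eq_add, mul_assoc, mul_assoc, Algebra.smul_def]
  | mul x y hx hy => rw [mul_assoc, hx, hy, hx]; noncomm_ring
  | add x y hx hy => simp only [add_mul, map_add, mul_add, hx, hy]; abel

theorem exteriorPower_eq_bot_of_finrank_lt [Nontrivial R] [Module.Free R M] [Module.Finite R M]
    {p : ℕ} (hp : Module.finrank R M < p) : ⋀[R]^p M = ⊥ := by
  have hrank : Module.finrank R (⋀[R]^p M) = 0 := by
    rw [exteriorPower.finrank_eq, Nat.choose_eq_zero_of_lt hp]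
  exact Submodule.subsingleton_iff_eq_bot.1 ((Module.finrank_eq_zero_iff_of_free R _).1 hrank)

theorem mul_ι_eq_zero_of_mem_exteriorPower_finrank [Nontrivial R] [Module.Free R M]
    [Module.Finite R M] {x : ExteriorAlgebra R M} (hx : x ∈ ⋀[R]^(Module.finrank R M) M) (m : M) :
    x * ι R m = 0 := by
  have hmem : x * ι R m ∈ ⋀[R]^(Module.finrank R M + 1) M :=
    Submodule.mul_mem_mul hx (LinearMap.mem_range_self (ι R) m)
  rwa [exteriorPower_eq_bot_of_finrank_lt (Nat.lt_succ_self _), Submodule.mem_bot] at hmem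

theorem ι_mul_mem_map_ι_mul_top {N : Submodule R M} (m : M) {x : ExteriorAlgebra R M}
    (hx : x ∈ N.map (ι R) * ⊤) : ι R m * x ∈ N.map (ι R) * ⊤ := by
  induction hx using Submodule.mul_induction_on' with
  | mem_mul_mem _ hw y _ =>
    obtain ⟨n, hn, rfl⟩ := hw
    rw [← mul_assoc, ι_mul_ι_eq_neg m n, neg_mul, mul_assoc, ← mul_neg]
    exact Submodule.mul_mem_mul (Submodule.mem_map_of_mem hn) Submodule.mem_top
  | add x _ y _ hx hy => rw [mul_add]; exact add_mem hx hy

theorem apply_mem_map_ι_mul_top_of_leibniz {D : Module.End R (ExteriorAlgebra R M)}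
    (hD : ∀ a b, D (a * b) = D a * b + a * D b) {N : Submodule R M}
    (hDN : ∀ m ∈ N, D (ι R m) ∈ LinearMap.range (ι R)) {β : ExteriorAlgebra R M}
    (hβ : β ∈ N.map (ι R) ^ 2 * ⊤) : D β ∈ N.map (ι R) * ⊤ := by
  rw [pow_two, mul_assoc] at hβ
  induction hβ using Submodule.mul_induction_on' with
  | mem_mul_mem _ hw x hx =>
    obtain ⟨m, hm, rfl⟩ := hw
    obtain ⟨m', hm'⟩ := hDN m hm
    rw [hD, ← hm']
    exact add_mem (ι_mul_mem_map_ι_mul_top m' hx)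
      (Submodule.mul_mem_mul (Submodule.mem_map_of_mem hm) Submodule.mem_top)
  | add x _ y _ hx hy => rw [map_add]; exact add_mem hx hy

-- For `ι_ξ`, take `M = E × G` and `N = E × 0`.
theorem iotaXi_sq_exchange_general {D : Module.End R (ExteriorAlgebra R M)}
    (hD : ∀ a b, D (a * b) = D a * b + a * D b) {N : Submodule R M}
    (hDN : ∀ m ∈ N, D (ι R m) ∈ LinearMap.range (ι R)) {α β : ExteriorAlgebra R M}
    (hα : ∀ m ∈ N, α * ι R m = 0) (hβ : β ∈ N.map (ι R) ^ 2 * ⊤) :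
    (D ^ 2) α * β = α * (D ^ 2) β := by
  have hαW : ∀ w ∈ N.map (ι R), α * w = 0 := by
    rintro _ ⟨m, hm, rfl⟩
    exact hα m hm
  rw [pow_two, Module.End.mul_apply, Module.End.mul_apply]
  exact sq_mul_eq_mul_sq_of_leibniz (D := D.toAddMonoidHom) hD
    (mul_eq_zero_of_mem_mul_top hαW (sq_mul_top_le_mul_top _ hβ))
    (mul_eq_zero_of_mem_mul_top hαW (apply_mem_map_ι_mul_top_of_leibniz hD hDN hβ))

end DegreeOne

section IotaXi

variable {E G} {k : ℕ} (g : Fin k → G) (f : Fin k → Module.Dual ℝ E)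

theorem iotaXi_apply (x : ExteriorAlgebra ℝ (E × G)) :
    iotaXi E G g f x =
      ∑ i, ι ℝ (0, g i) * CliffordAlgebra.contractLeft (fTilde E G (f i)) x := by
  simp only [iotaXi, ghost, LinearMap.sum_apply, LinearMap.comp_apply, LinearMap.mulLeft_apply]

theorem iotaXi_mul (a b : ExteriorAlgebra ℝ (E × G)) :
    iotaXi E G g f (a * b) = iotaXi E G g f a * b + a * iotaXi E G g f b := by
  simp only [iotaXi_apply, ι_mul_contractLeft_mul, Finset.sum_add_distrib, Finset.sum_mul,
    Finset.mul_sum]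

theorem iotaXi_ι_mem_range_ι (m : E × G) :
    iotaXi E G g f (ι ℝ m) ∈ LinearMap.range (ι ℝ) := by
  rw [iotaXi_apply]
  refine Submodule.sum_mem _ fun i _ => ?_
  rw [CliffordAlgebra.contractLeft_ι, ← Algebra.commutes, ← Algebra.smul_def]
  exact Submodule.smul_mem _ _ (LinearMap.mem_range_self _ _)

theorem inclE_eq_map : inclE E G = ExteriorAlgebra.map (LinearMap.inl ℝ E G) :=
  rfl

theorem HasEDegree.mem_map_ι_pow {p : ℕ} {x : ExteriorAlgebra ℝ (E × G)}
    (hx : HasEDegree E G p x) :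
    x ∈ (LinearMap.range (LinearMap.inl ℝ E G)).map (ι ℝ) ^ p := by
  rwa [← ι_range_map_map, ← Submodule.map_pow, ← inclE_eq_map]

theorem HasEDegree.mul_ι_eq_zero [FiniteDimensional ℝ E] {α : ExteriorAlgebra ℝ (E × G)}
    (hα : HasEDegree E G (Module.finrank ℝ E) α) :
    ∀ m ∈ LinearMap.range (LinearMap.inl ℝ E G), α * ι ℝ m = 0 := by
  obtain ⟨a, ha, rfl⟩ := hα
  rintro _ ⟨e, rfl⟩
  calc
    inclE E G a * ι ℝ (LinearMap.inl ℝ E G e) = inclE E G (a * ι ℝ e) := by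
      rw [map_mul, inclE_eq_map, map_apply_ι]
    _ = 0 := by rw [mul_ι_eq_zero_of_mem_exteriorPower_finrank ha e, map_zero]

end IotaXi

/-- If `α` has `E`-degree `n = dim E` (a top form) and `β` has
`E`-degree `2`, then `ι_ξ²(α) * β = α * ι_ξ²(β)`. -/
theorem iotaXi_sq_exchange [FiniteDimensional ℝ E] [FiniteDimensional ℝ G]
    {k : ℕ} (g : Fin k → G) (f : Fin k → Module.Dual ℝ E)
    (α β : ExteriorAlgebra ℝ (E × G))
    (hα : HasEDegree E G (Module.finrank ℝ E) α) (hβ : HasEDegree E G 2 β) :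
    (iotaXi E G g f ^ 2) α * β = α * (iotaXi E G g f ^ 2) β := by
  have hβ_ideal : β ∈ (LinearMap.range (LinearMap.inl ℝ E G)).map (ι ℝ) ^ 2 * ⊤ := by
    simpa only [mul_one] using Submodule.mul_mem_mul hβ.mem_map_ι_pow (Submodule.mem_top (x := 1))
  exact iotaXi_sq_exchange_general (iotaXi_mul g f) (fun m _ => iotaXi_ι_mem_range_ι g f m)
    hα.mul_ι_eq_zero hβ_ideal
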